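/- arXiv:1804.11033 — 2 statements merged into one kernel-verified Lean document; each statement's English description precedes it below -/
import Mathlib

section
/- One has cos²(π/3) + cos²(π/5) = cos²(π/10). Consequently K_{π/5}((3,5,10)) = 0 and K_{π/5}((3,3,5,5)) = 0; that is, at side length a = π/5 both vertex patterns (3,5,10) and (3,3,5,5) have total angle exactly 2π, so their critical side-lengths both equal π/5. -/
/-
A regular spherical `f`-gon of side length `a` has corner angle
`2 * arcsin (cos (π / f) / cos (a / 2))`. If `cos² (π / f) + cos² (π / g) = cos² (a / 2)`, the two
arcsine arguments for `f` and `g` are legs of a right triangle with hypotenuse `1`, so an `f`-gon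
and a `g`-gon together fill a half turn; two such pairs fill a full turn. At side length `2π / h` an
`h`-gon degenerates to a hemisphere and fills a half turn on its own. Since corner angles strictly
increase with the side length, the defect has at most one zero, and any zero is the critical
side length.
-/

/-- The angle defect `K_a(p) = 2π − Σ_{f ∈ p} 2·arcsin(cos(π/f)/cos(a/2))` of a
vertex pattern given as a list. -/
noncomputable def K (p : List ℕ) (a : ℝ) : ℝ :=
  2 * Real.pi -
    (p.map (fun f => 2 * Real.arcsin (Real.cos (Real.pi / (f : ℝ)) / Real.cos (a / 2)))).sum

/-- The critical side-length `a_c(p) = max{a ∈ [0, 2π/f_N] : K_a(p) ≥ 0}` of a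
vertex pattern, where `f_N` is the last (largest) entry. -/
noncomputable def ac (p : List ℕ) : ℝ :=
  sSup {a : ℝ | a ∈ Set.Icc 0 (2 * Real.pi / (p.getLast! : ℝ)) ∧ 0 ≤ K p a}

open Real Set

theorem arcsin_add_arcsin_of_sq_add_sq_eq_one {x y : ℝ} (hx : 0 ≤ x) (hy : 0 ≤ y)
    (h : x ^ 2 + y ^ 2 = 1) : arcsin x + arcsin y = π / 2 := by
  have hxy : arccos x = arcsin y := by
    rw [arccos_eq_arcsin hx, ← eq_sub_of_add_eq' h, sqrt_sq hy]
  rw [← hxy, arccos, add_sub_cancel]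

theorem cos_pi_div_pos {f : ℕ} (hf : 3 ≤ f) : 0 < cos (π / f) := by
  have hf' : (2 : ℝ) < f := by exact_mod_cast hf
  have hlt : π / f < π / 2 := div_lt_div_of_pos_left pi_pos two_pos hf'
  have hnonneg : 0 ≤ π / f := by positivity
  exact cos_pos_of_mem_Ioo ⟨by linarith [pi_pos], hlt⟩

theorem cos_sq_pi_div_three_add_cos_sq_pi_div_five :
    cos (π / 3) ^ 2 + cos (π / 5) ^ 2 = cos (π / 10) ^ 2 := by
  have half_angle : cos (π / 10) ^ 2 = 1 / 2 + cos (π / 5) / 2 := by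
    rw [cos_sq, show 2 * (π / 10) = π / 5 by ring]
  rw [half_angle, cos_pi_div_three]
  linarith [quadratic_root_cos_pi_div_five]

/-- The interior angle of a regular spherical `f`-gon with side length `a`, that is, the summand
contributed by the entry `f` of a vertex pattern to the total angle in `K`. -/
noncomputable def cornerAngle (f : ℕ) (a : ℝ) : ℝ :=
  2 * arcsin (cos (π / f) / cos (a / 2))

theorem cornerAngle_add_cornerAngle {f g : ℕ} {a : ℝ} (hf : 0 ≤ cos (π / f))
    (hg : 0 ≤ cos (π / g)) (ha : 0 < cos (a / 2))
    (h : cos (π / f) ^ 2 + cos (π / g) ^ 2 = cos (a / 2) ^ 2) :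
    cornerAngle f a + cornerAngle g a = π := by
  have unit_hypotenuse : (cos (π / f) / cos (a / 2)) ^ 2 + (cos (π / g) / cos (a / 2)) ^ 2 = 1 := by
    rw [div_pow, div_pow, ← add_div, h, div_self (pow_pos ha 2).ne']
  have half_sum := arcsin_add_arcsin_of_sq_add_sq_eq_one (div_nonneg hf ha.le)
    (div_nonneg hg ha.le) unit_hypotenuse
  unfold cornerAngle
  linarith

theorem cornerAngle_two_pi_div {h : ℕ} (hh : cos (π / h) ≠ 0) : cornerAngle h (2 * π / h) = π := by
  rw [cornerAngle, show 2 * π / h / 2 = π / h by ring, div_self hh, arcsin_one]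
  ring

theorem strictMonoOn_cornerAngle {f : ℕ} (hf : 3 ≤ f) :
    StrictMonoOn (cornerAngle f) (Icc 0 (2 * π / f)) := by
  intro a ha b hb hab
  have hcos : 0 < cos (π / f) := cos_pi_div_pos hf
  have hfπ : π / f ≤ π := div_le_self pi_pos.le (by exact_mod_cast (by omega : 1 ≤ f))
  have hbf : b / 2 ≤ π / f := by linarith [hb.2, mul_div_assoc 2 π (f : ℝ)]
  have cos_f_le : cos (π / f) ≤ cos (b / 2) :=
    cos_le_cos_of_nonneg_of_le_pi (by linarith [hb.1]) hfπ hbf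
  have cos_lt : cos (b / 2) < cos (a / 2) :=
    cos_lt_cos_of_nonneg_of_le_pi (by linarith [ha.1]) (hbf.trans hfπ) (by linarith)
  have hb_pos : 0 < cos (b / 2) := hcos.trans_le cos_f_le
  have ratio_pos : 0 < cos (π / f) / cos (a / 2) := div_pos hcos (hb_pos.trans cos_lt)
  exact mul_lt_mul_of_pos_left
    (arcsin_lt_arcsin (by linarith) (div_lt_div_of_pos_left hcos hb_pos cos_lt)
      ((div_le_one hb_pos).2 cos_f_le)) two_pos

-- Not `rfl`: in `K`, the map is elaborated over the coerced list `do let a ← p; pure (a : ℝ)`, with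
-- `f : ℝ`, rather than as a cast of each natural number `f`.
theorem K_eq_sub_sum_cornerAngle (p : List ℕ) (a : ℝ) :
    K p a = 2 * π - (p.map fun f => cornerAngle f a).sum := by
  simp only [K, cornerAngle, List.bind_eq_flatMap, List.pure_def, ← List.map_eq_flatMap,
    List.map_map, Function.comp_def]

theorem K_triple_eq_zero {f g h : ℕ} (hf : 0 ≤ cos (π / f)) (hg : 0 ≤ cos (π / g))
    (hh : 0 < cos (π / h)) (hsq : cos (π / f) ^ 2 + cos (π / g) ^ 2 = cos (π / h) ^ 2) :
    K [f, g, h] (2 * π / h) = 0 := by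
  have half_side : 2 * π / h / 2 = π / h := by ring
  have half_turn : cornerAngle f (2 * π / h) + cornerAngle g (2 * π / h) = π :=
    cornerAngle_add_cornerAngle hf hg (by rwa [half_side]) (by rwa [half_side])
  simp only [K_eq_sub_sum_cornerAngle, List.map_cons, List.map_nil, List.sum_cons, List.sum_nil]
  linarith [cornerAngle_two_pi_div hh.ne']

theorem K_pairs_eq_zero {f g : ℕ} {a : ℝ} (hf : 0 ≤ cos (π / f)) (hg : 0 ≤ cos (π / g))
    (ha : 0 < cos (a / 2)) (hsq : cos (π / f) ^ 2 + cos (π / g) ^ 2 = cos (a / 2) ^ 2) :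
    K [f, f, g, g] a = 0 := by
  have half_turn : cornerAngle f a + cornerAngle g a = π := cornerAngle_add_cornerAngle hf hg ha hsq
  simp only [K_eq_sub_sum_cornerAngle, List.map_cons, List.map_nil, List.sum_cons, List.sum_nil]
  linarith

/-- A vertex pattern: a finite nonempty nondecreasing sequence of integers, each at least `3`.
It is the class of lists on which `ac` is the critical side-length: the last entry exists and is the
largest one. -/
structure IsVertexPattern (p : List ℕ) : Prop where
  ne_nil : p ≠ []
  sorted : p.SortedLE
  three_le : ∀ f ∈ p, 3 ≤ f

namespace IsVertexPattern

variable {p : List ℕ} {a : ℝ}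

theorem le_getLast! (hp : IsVertexPattern p) {f : ℕ} (hf : f ∈ p) : f ≤ p.getLast! := by
  rw [List.getLast!_of_getLast? (List.getLast?_eq_some_getLast hp.ne_nil)]
  exact hp.sorted.pairwise.rel_getLast hf

theorem strictAntiOn_K (hp : IsVertexPattern p) :
    StrictAntiOn (K p) (Icc 0 (2 * π / p.getLast!)) := by
  intro a ha b hb hab
  have cornerAngle_lt : ∀ f ∈ p, cornerAngle f a < cornerAngle f b := by
    intro f hf
    have f_pos : (0 : ℝ) < f := by exact_mod_cast three_pos.trans_le (hp.three_le f hf)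
    have f_le : (f : ℝ) ≤ p.getLast! := by exact_mod_cast hp.le_getLast! hf
    have Icc_subset : Icc 0 (2 * π / p.getLast!) ⊆ Icc 0 (2 * π / f) :=
      Icc_subset_Icc_right (div_le_div_of_nonneg_left two_pi_pos.le f_pos f_le)
    exact strictMonoOn_cornerAngle (hp.three_le f hf) (Icc_subset ha) (Icc_subset hb) hab
  rw [K_eq_sub_sum_cornerAngle, K_eq_sub_sum_cornerAngle]
  exact sub_lt_sub_left (List.sum_lt_sum_of_ne_nil hp.ne_nil _ _ cornerAngle_lt) _

theorem ac_eq_of_K_eq_zero (hp : IsVertexPattern p) (ha : a ∈ Icc 0 (2 * π / p.getLast!))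
    (hK : K p a = 0) : ac p = a := by
  refine IsGreatest.csSup_eq ⟨⟨ha, hK.ge⟩, fun b hb => ?_⟩
  exact (hp.strictAntiOn_K.le_iff_ge ha hb.1).1 (hK.trans_le hb.2)

end IsVertexPattern

/-- One has cos²(π/3) + cos²(π/5) = cos²(π/10).  Consequently at side length π/5
both patterns (3,5,10) and (3,3,5,5) have angle defect zero, so their critical
side-lengths both equal π/5. -/
theorem stmt8 :
    Real.cos (Real.pi / 3) ^ 2 + Real.cos (Real.pi / 5) ^ 2 = Real.cos (Real.pi / 10) ^ 2 ∧
    K [3, 5, 10] (Real.pi / 5) = 0 ∧ K [3, 3, 5, 5] (Real.pi / 5) = 0 ∧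
    ac [3, 5, 10] = Real.pi / 5 ∧ ac [3, 3, 5, 5] = Real.pi / 5 := by
  have hsq := cos_sq_pi_div_three_add_cos_sq_pi_div_five
  have h3 : 0 < cos (π / 3) := cos_pi_div_pos (f := 3) le_rfl
  have h5 : 0 < cos (π / 5) := cos_pi_div_pos (f := 5) (by norm_num)
  have h10 : 0 < cos (π / 10) := cos_pi_div_pos (f := 10) (by norm_num)
  have side_eq : 2 * π / 10 = π / 5 := by ring
  have half_side : π / 5 / 2 = π / 10 := by ring
  have K_triple : K [3, 5, 10] (π / 5) = 0 :=
    side_eq ▸ K_triple_eq_zero (f := 3) (g := 5) (h := 10) h3.le h5.le h10 hsq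
  have K_pairs : K [3, 3, 5, 5] (π / 5) = 0 :=
    K_pairs_eq_zero (f := 3) (g := 5) h3.le h5.le (half_side ▸ h10) (half_side ▸ hsq)
  have triple_pattern : IsVertexPattern [3, 5, 10] := ⟨by decide, by decide, by decide⟩
  have pairs_pattern : IsVertexPattern [3, 3, 5, 5] := ⟨by decide, by decide, by decide⟩
  refine ⟨hsq, K_triple, K_pairs, triple_pattern.ac_eq_of_K_eq_zero ⟨by positivity, ?_⟩ K_triple,
    pairs_pattern.ac_eq_of_K_eq_zero ⟨by positivity, ?_⟩ K_pairs⟩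
  · exact side_eq.ge
  · change π / 5 ≤ 2 * π / 5
    linarith [pi_pos]
end

section
/- At side length a = arctan 2 the three vertex patterns (3,3,3,3,3), (3,3,3,5) and (3,5,5) all have angle defect zero: K_{arctan 2}((3,3,3,3,3)) = K_{arctan 2}((3,3,3,5)) = K_{arctan 2}((3,5,5)) = 0. Equivalently, cos(arctan(2)/2) = 1/(2·sin(π/5)), and the critical side-lengths of these three patterns all equal arctan 2. -/
/-!
Around a vertex of the spherical icosahedron sit five triangles of side `arctan 2`, so each angle is
`2π/5`; the outer edges of these five triangles bound a regular pentagon, whose angle is made of two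
triangle angles, hence `4π/5`. Analytically, `cos (arctan 2 / 2) = 1 / (2 sin (π/5))` turns the two
arcsine arguments into `sin (π/5)` and `sin (2π/5)`. So a pattern of `m` triangles and `n` pentagons
has defect zero at side `arctan 2` exactly when `m + 2n = 5`. Since polygon angles strictly increase
with the side length, the defect strictly decreases, and its zero is the critical side-length.
-/

open Real Set

/-- The interior angle of the regular spherical `f`-gon with side length `a`, for
`0 < a ≤ 2π/f`. At `a = 2π/f` the polygon is a hemisphere, with angle `π`; at `a = 0` the value is
the Euclidean angle. -/
noncomputable def polygonAngle (f a : ℝ) : ℝ :=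
  2 * arcsin (cos (π / f) / cos (a / 2))

theorem polygonAngle_strictMonoOn {f : ℝ} (hf : 2 < f) :
    StrictMonoOn (polygonAngle f) (Icc 0 (2 * π / f)) := by
  rintro a ⟨ha, -⟩ b ⟨-, hb⟩ hab
  have hf' : π / f < π / 2 := by gcongr
  have hf_pos : 0 < π / f := by positivity
  have hbf : b / 2 ≤ π / f := by
    rw [mul_div_assoc] at hb
    linarith
  have hcos_f : 0 < cos (π / f) := cos_pos_of_mem_Ioo ⟨by linarith, hf'⟩
  have hcos_fb : cos (π / f) ≤ cos (b / 2) :=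
    cos_le_cos_of_nonneg_of_le_pi (by linarith) (by linarith) hbf
  have hcos_ba : cos (b / 2) < cos (a / 2) :=
    cos_lt_cos_of_nonneg_of_le_pi (by linarith) (by linarith) (by linarith)
  have hcos_b : 0 < cos (b / 2) := hcos_f.trans_le hcos_fb
  have hratio : cos (π / f) / cos (a / 2) < cos (π / f) / cos (b / 2) :=
    div_lt_div_of_pos_left hcos_f hcos_b hcos_ba
  have hratio_b : cos (π / f) / cos (b / 2) ≤ 1 := (div_le_one hcos_b).2 hcos_fb
  have hratio_a : 0 < cos (π / f) / cos (a / 2) := div_pos hcos_f (hcos_b.trans hcos_ba)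
  exact mul_lt_mul_of_pos_left
    (strictMonoOn_arcsin ⟨by linarith, by linarith⟩ ⟨by linarith, hratio_b⟩ hratio) two_pos

theorem K_eq_two_pi_sub_sum_polygonAngle (p : List ℕ) (a : ℝ) :
    K p a = 2 * π - (p.map fun f : ℕ ↦ polygonAngle f a).sum := by
  -- The cast in `K` elaborates to a coercion of the whole list through the list monad.
  simp [K, polygonAngle, ← List.map_eq_flatMap, Function.comp_def]

theorem K_strictAntiOn {p : List ℕ} {b : ℝ} (hp : p ≠ [])
    (h : ∀ f ∈ p, 2 < f ∧ b ≤ 2 * π / f) : StrictAntiOn (K p) (Icc 0 b) := by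
  intro x hx y hy hxy
  simp only [K_eq_two_pi_sub_sum_polygonAngle]
  refine sub_lt_sub_left (List.sum_lt_sum_of_ne_nil hp _ _ fun f hf ↦ ?_) _
  obtain ⟨hf2, hbf⟩ := h f hf
  exact polygonAngle_strictMonoOn (by exact_mod_cast hf2) (Icc_subset_Icc_right hbf hx)
    (Icc_subset_Icc_right hbf hy) hxy

theorem ac_eq_of_K_eq_zero {p : List ℕ} {a : ℝ} (hp : p.SortedLE) (ha : 0 ≤ a)
    (h : ∀ f ∈ p, 2 < f ∧ a ≤ 2 * π / f) (hK : K p a = 0) : ac p = a := by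
  have hne : p ≠ [] := by
    rintro rfl
    simp [K, pi_ne_zero] at hK
  have hlast : p.getLast! = p.getLast hne :=
    List.getLast!_of_getLast? (List.getLast?_eq_some_getLast hne)
  have hmem : p.getLast! ∈ p := hlast ▸ List.getLast_mem hne
  have hanti : StrictAntiOn (K p) (Icc 0 (2 * π / (p.getLast! : ℝ))) := by
    refine K_strictAntiOn hne fun f hf ↦ ⟨(h f hf).1, ?_⟩
    have hf0 : (0 : ℝ) < f := by exact_mod_cast two_pos.trans (h f hf).1
    have hle : f ≤ p.getLast! := hlast ▸ hp.pairwise.rel_getLast hf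
    gcongr
  have ha_mem : a ∈ Icc 0 (2 * π / (p.getLast! : ℝ)) := ⟨ha, (h _ hmem).2⟩
  have hgreatest : IsGreatest {x | x ∈ Icc 0 (2 * π / (p.getLast! : ℝ)) ∧ 0 ≤ K p x} a :=
    ⟨⟨ha_mem, hK.ge⟩, fun x ⟨hx, hKx⟩ ↦ (hanti.le_iff_ge ha_mem hx).1 (hK.trans_le hKx)⟩
  exact hgreatest.csSup_eq

theorem sin_pi_div_five_pos : 0 < sin (π / 5) :=
  sin_pos_of_pos_of_lt_pi (by positivity) (by linarith [pi_pos])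

theorem sin_sq_pi_div_five : sin (π / 5) ^ 2 = (5 - √5) / 8 := by
  rw [sin_sq, cos_pi_div_five]
  linear_combination (-1 / 16) * sq_sqrt (show (0 : ℝ) ≤ 5 by norm_num)

theorem arctan_two_nonneg : 0 ≤ arctan 2 :=
  arctan_nonneg.2 zero_le_two

theorem cos_arctan_two_div_two_pos : 0 < cos (arctan 2 / 2) :=
  cos_pos_of_mem_Ioo
    ⟨by linarith [arctan_two_nonneg, pi_pos], by linarith [arctan_lt_pi_div_two 2, pi_pos]⟩

theorem cos_sq_arctan_two_div_two : cos (arctan 2 / 2) ^ 2 = (5 + √5) / 10 := by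
  rw [cos_sq, mul_div_cancel₀ _ two_ne_zero, cos_arctan, show (1 + 2 ^ 2 : ℝ) = 5 by norm_num,
    ← sqrt_div_self']
  ring

theorem cos_arctan_two_div_two : cos (arctan 2 / 2) = 1 / (2 * sin (π / 5)) := by
  have hsin := sin_pi_div_five_pos
  have hcos := cos_arctan_two_div_two_pos
  rw [eq_div_iff (by positivity), ← sq_eq_sq₀ (by positivity) zero_le_one]
  calc (cos (arctan 2 / 2) * (2 * sin (π / 5))) ^ 2
      = 4 * (cos (arctan 2 / 2) ^ 2 * sin (π / 5) ^ 2) := by ring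
    _ = (5 ^ 2 - √5 ^ 2) / 20 := by
      rw [cos_sq_arctan_two_div_two, sin_sq_pi_div_five]
      ring
    _ = 1 ^ 2 := by norm_num

theorem polygonAngle_three_arctan_two : polygonAngle 3 (arctan 2) = 2 * π / 5 := by
  have hratio : cos (π / 3) / cos (arctan 2 / 2) = sin (π / 5) := by
    rw [cos_arctan_two_div_two, cos_pi_div_three, div_div_div_cancel_left' _ _ one_ne_zero,
      mul_div_cancel_left₀ _ two_ne_zero]
  rw [polygonAngle, hratio, arcsin_sin (by linarith [pi_pos]) (by linarith [pi_pos])]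
  ring

theorem cos_pi_div_five_div_cos_arctan_two_div_two :
    cos (π / 5) / cos (arctan 2 / 2) = sin (2 * π / 5) := by
  rw [cos_arctan_two_div_two, mul_div_assoc, sin_two_mul, div_div_eq_mul_div, div_one]
  ring

theorem polygonAngle_five_arctan_two : polygonAngle 5 (arctan 2) = 4 * π / 5 := by
  rw [polygonAngle, cos_pi_div_five_div_cos_arctan_two_div_two,
    arcsin_sin (by linarith [pi_pos]) (by linarith [pi_pos])]
  ring

theorem arctan_two_le_two_pi_div_five : arctan 2 ≤ 2 * π / 5 := by
  have h0 := arctan_two_nonneg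
  have hlt := arctan_lt_pi_div_two 2
  have hle : cos (π / 5) ≤ cos (arctan 2 / 2) := by
    rw [← div_le_one cos_arctan_two_div_two_pos, cos_pi_div_five_div_cos_arctan_two_div_two]
    exact sin_le_one _
  have hhalf : arctan 2 / 2 ≤ π / 5 := (strictAntiOn_cos.le_iff_ge
    ⟨by positivity, by linarith⟩ ⟨by positivity, by linarith⟩).1 hle
  linarith

/-- The sorted vertex pattern `(3, …, 3, 5, …, 5)` of `m` triangles and `n` pentagons. -/
def trianglePentagonPattern (m n : ℕ) : List ℕ :=
  .replicate m 3 ++ .replicate n 5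

theorem sortedLE_trianglePentagonPattern (m n : ℕ) : (trianglePentagonPattern m n).SortedLE := by
  simp +contextual [trianglePentagonPattern, List.sortedLE_iff_pairwise, List.pairwise_append,
    List.mem_replicate]

theorem eq_three_or_eq_five_of_mem_trianglePentagonPattern {m n f : ℕ}
    (hf : f ∈ trianglePentagonPattern m n) : f = 3 ∨ f = 5 :=
  (List.mem_append.1 hf).imp List.eq_of_mem_replicate List.eq_of_mem_replicate

theorem K_trianglePentagonPattern_arctan_two (m n : ℕ) :
    K (trianglePentagonPattern m n) (arctan 2) = (5 - (m + 2 * n)) * (2 * π / 5) := by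
  simp only [K_eq_two_pi_sub_sum_polygonAngle, trianglePentagonPattern, List.map_append,
    List.map_replicate, List.sum_append, List.sum_replicate, nsmul_eq_mul, Nat.cast_ofNat,
    polygonAngle_three_arctan_two, polygonAngle_five_arctan_two]
  ring

theorem K_trianglePentagonPattern_arctan_two_eq_zero_iff {m n : ℕ} :
    K (trianglePentagonPattern m n) (arctan 2) = 0 ↔ m + 2 * n = 5 := by
  have hangle : 2 * π / 5 ≠ 0 := by positivity
  rw [K_trianglePentagonPattern_arctan_two, mul_eq_zero_iff_right hangle, sub_eq_zero, eq_comm]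
  norm_cast

theorem ac_trianglePentagonPattern_eq_arctan_two {m n : ℕ} (h : m + 2 * n = 5) :
    ac (trianglePentagonPattern m n) = arctan 2 := by
  have hle := arctan_two_le_two_pi_div_five
  refine ac_eq_of_K_eq_zero (sortedLE_trianglePentagonPattern m n) arctan_two_nonneg
    (fun f hf ↦ ?_) (K_trianglePentagonPattern_arctan_two_eq_zero_iff.2 h)
  obtain rfl | rfl := eq_three_or_eq_five_of_mem_trianglePentagonPattern hf
  · exact ⟨by norm_num, by push_cast; linarith [pi_pos]⟩
  · exact ⟨by norm_num, by exact_mod_cast hle⟩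

/-- At side length arctan 2 the patterns (3,3,3,3,3), (3,3,3,5) and (3,5,5) all have
angle defect zero; equivalently cos(arctan(2)/2) = 1/(2·sin(π/5)); and the critical
side-lengths of these three patterns all equal arctan 2. -/
theorem stmt10 :
    K [3, 3, 3, 3, 3] (Real.arctan 2) = 0 ∧
    K [3, 3, 3, 5] (Real.arctan 2) = 0 ∧
    K [3, 5, 5] (Real.arctan 2) = 0 ∧
    Real.cos (Real.arctan 2 / 2) = 1 / (2 * Real.sin (Real.pi / 5)) ∧
    ac [3, 3, 3, 3, 3] = Real.arctan 2 ∧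
    ac [3, 3, 3, 5] = Real.arctan 2 ∧
    ac [3, 5, 5] = Real.arctan 2 :=
  ⟨K_trianglePentagonPattern_arctan_two_eq_zero_iff (m := 5) (n := 0) |>.2 rfl,
   K_trianglePentagonPattern_arctan_two_eq_zero_iff (m := 3) (n := 1) |>.2 rfl,
   K_trianglePentagonPattern_arctan_two_eq_zero_iff (m := 1) (n := 2) |>.2 rfl,
   cos_arctan_two_div_two,
   ac_trianglePentagonPattern_eq_arctan_two (m := 5) (n := 0) rfl,
   ac_trianglePentagonPattern_eq_arctan_two (m := 3) (n := 1) rfl,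
   ac_trianglePentagonPattern_eq_arctan_two (m := 1) (n := 2) rfl⟩
end
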